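/- arXiv:1804.02268 — 2 statements merged into one kernel-verified Lean document; each statement's English description precedes it below -/
import Mathlib

section
/- (Roberts' theorem on parallel domains.) Suppose |A| ≥ 3 and 𝒰 = ∏_{i=1}^n U_i is an unrestricted parallel utility domain. Then for every social choice mechanism (x,t) on 𝒰 that is DSIC, deterministic, onto, IR and satisfies no subsidy, there exist nonnegative weights k_1,…,k_n, not all zero, and real constants (C_a)_{a∈A}, such that for every u ∈ 𝒰, x(u) ∈ argmax_{a∈A} ( Σ_{i=1}^n k_i p_{i,a} + C_a ). -/
/-!
Common framework: agents indexed by `I`, alternatives `A` (finite, nonempty).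
A type of an agent is a family `u : A → ℝ → ℝ`, where `u a z` is the utility
when alternative `a` is selected and the agent pays `z`.
-/

noncomputable section

namespace NQLSC

/-- A type (utility family) of an agent. -/
abbrev Util (A : Type*) := A → ℝ → ℝ

variable {A I : Type*}

/-- (S1): each `u a` is continuous and strictly decreasing in the payment. -/
def S1 (u : Util A) : Prop := ∀ a, Continuous (u a) ∧ StrictAnti (u a)

/-- `min_{a'∈A} u_{a'}(0)`, the value of the worst alternative at zero payment. -/
def minVal [Fintype A] [Nonempty A] (u : Util A) : ℝ :=
  Finset.univ.inf' Finset.univ_nonempty (fun a => u a 0)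

/-- (S2): as the payment tends to `+∞`, the utility of every alternative drops
(strictly) below `min_{a'} u_{a'}(0)`; for strictly decreasing utilities this is
equivalent to the utility being below that value at some payment. -/
def S2 [Fintype A] [Nonempty A] (u : Util A) : Prop :=
  ∀ a, ∃ z : ℝ, u a z < minVal u

/-- The willingness to pay `p_a = u_a⁻¹(min_{a'} u_{a'}(0))` (under (S1),(S2) this
`sInf` is the unique payment at which `u a` attains `minVal u`). -/
def wtp [Fintype A] [Nonempty A] (u : Util A) (a : A) : ℝ :=
  sInf {z : ℝ | u a z ≤ minVal u}

/-- A parallel type: (S1), (S2), and for all `a, b` with `v_a ≥ v_b` and all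
`z ∈ [0, p_b]`, `u_a (z + (p_a − p_b)) = u_b z`. -/
def IsParallel [Fintype A] [Nonempty A] (u : Util A) : Prop :=
  S1 u ∧ S2 u ∧ ∀ a b : A, u b 0 ≤ u a 0 → ∀ z : ℝ, 0 ≤ z → z ≤ wtp u b →
    u a (z + (wtp u a - wtp u b)) = u b z

/-- Unrestricted willingness to pay: every nonnegative vector with a zero entry is
the willingness-to-pay vector of some type in the domain. -/
def UnrestrictedWTP [Fintype A] [Nonempty A] (U : Set (Util A)) : Prop :=
  ∀ lam : A → ℝ, (∀ a, 0 ≤ lam a) → (∃ a, lam a = 0) →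
    ∃ u ∈ U, ∀ a, wtp u a = lam a

/-- Dominant-strategy incentive compatibility of a (deterministic) mechanism `(x,t)`
on the domain `𝒰 = ∏ i, U i`. -/
def DSIC [DecidableEq I] (U : I → Set (Util A)) (x : (I → Util A) → A)
    (t : (I → Util A) → I → ℝ) : Prop :=
  ∀ uh : I → Util A, (∀ j, uh j ∈ U j) → ∀ i, ∀ ui ∈ U i,
    ui (x uh) (t uh i) ≤
      ui (x (Function.update uh i ui)) (t (Function.update uh i ui) i)

/-- Individual rationality. -/
def IR [Fintype A] [Nonempty A] [DecidableEq I] (U : I → Set (Util A))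
    (x : (I → Util A) → A) (t : (I → Util A) → I → ℝ) : Prop :=
  ∀ uh : I → Util A, (∀ j, uh j ∈ U j) → ∀ i, ∀ ui ∈ U i,
    minVal ui ≤ ui (x (Function.update uh i ui)) (t (Function.update uh i ui) i)

/-- No subsidy: the mechanism never makes positive transfers to an agent. -/
def NoSubsidy (U : I → Set (Util A)) (t : (I → Util A) → I → ℝ) : Prop :=
  ∀ u : I → Util A, (∀ j, u j ∈ U j) → ∀ i, 0 ≤ t u i

/-- Ontoness of the choice rule on the given domain. -/
def OntoMech (U : I → Set (Util A)) (x : (I → Util A) → A) : Prop :=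
  ∀ a, ∃ u : I → Util A, (∀ j, u j ∈ U j) ∧ x u = a

section Parallel

variable [Fintype A] [Nonempty A] {u : Util A}

lemma minVal_le (u : Util A) (a : A) : minVal u ≤ u a 0 :=
  Finset.inf'_le _ (Finset.mem_univ a)

/-- At the willingness to pay for `a`, the utility of `a` equals the worst value. -/
lemma apply_wtp (h1 : S1 u) (h2 : S2 u) (a : A) : u a (wtp u a) = minVal u := by
  obtain ⟨z, hz⟩ := h2 a
  obtain ⟨y, hy⟩ := mem_range_of_exists_le_of_exists_ge (h1 a).1 ⟨z, hz.le⟩ ⟨0, minVal_le u a⟩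
  have hset : {z : ℝ | u a z ≤ minVal u} = Set.Ici y := by
    ext w
    rw [Set.mem_ofPred_eq, ← hy, (h1 a).2.le_iff_ge, Set.mem_Ici]
  rw [wtp, hset, csInf_Ici, hy]

/-- For nonnegative payments, parallel types compare individually rational outcomes by the
quasi-linear surplus `wtp u a - t`. -/
lemma IsParallel.wtp_sub_le_wtp_sub (hu : IsParallel u) {a b : A} {s t : ℝ} (hs : 0 ≤ s)
    (ht : 0 ≤ t) (hmin : minVal u ≤ u a s) (hle : u b t ≤ u a s) :
    wtp u b - t ≤ wtp u a - s := by
  obtain ⟨h1, h2, hp⟩ := hu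
  have hsa : s ≤ wtp u a := by
    rw [← (h1 a).2.le_iff_ge, apply_wtp h1 h2]
    exact hmin
  rcases lt_or_ge (wtp u b) t with htb | htb
  · linarith
  rcases le_total (u b 0) (u a 0) with hba | hab
  · rw [← hp a b hba t ht htb, (h1 a).2.le_iff_ge] at hle
    linarith
  · rw [← hp b a hab s hs hsa, (h1 b).2.le_iff_ge] at hle
    linarith

end Parallel

section Mechanism

variable [Fintype A] [Nonempty A] [DecidableEq I] {U : I → Set (Util A)}
  {x : (I → Util A) → A} {t : (I → Util A) → I → ℝ}

/-- Weak monotonicity: when a single agent changes her type, her willingness to pay for the new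
outcome relative to the old one cannot decrease. -/
lemma weak_monotonicity (hpar : ∀ i, ∀ u ∈ U i, IsParallel u) (hDSIC : DSIC U x t)
    (hIR : IR U x t) (hNS : NoSubsidy U t) {u : I → Util A} (hu : ∀ j, u j ∈ U j) (i : I)
    {w : Util A} (hw : w ∈ U i) :
    wtp (u i) (x (Function.update u i w)) - wtp (u i) (x u) ≤
      wtp w (x (Function.update u i w)) - wtp w (x u) := by
  have hu' : ∀ j, Function.update u i w j ∈ U j := by
    intro j
    rcases eq_or_ne j i with rfl | hj
    · simpa using hw
    · simpa [hj] using hu j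
  have hIR1 := hIR u hu i (u i) (hu i)
  have hDS1 := hDSIC _ hu' i (u i) (hu i)
  rw [Function.update_eq_self] at hIR1
  rw [Function.update_idem, Function.update_eq_self] at hDS1
  have h1 := (hpar i _ (hu i)).wtp_sub_le_wtp_sub (hNS u hu i) (hNS _ hu' i) hIR1 hDS1
  have h2 := (hpar i _ hw).wtp_sub_le_wtp_sub (hNS _ hu' i) (hNS u hu i)
    (hIR u hu i w hw) (hDSIC u hu i w hw)
  linarith

/-- Positive association of differences: raising the chosen alternative strictly, relative to all
others and for every agent, preserves the choice. -/
lemma positive_association [Fintype I] (hpar : ∀ i, ∀ u ∈ U i, IsParallel u)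
    (hDSIC : DSIC U x t) (hIR : IR U x t) (hNS : NoSubsidy U t) {u u' : I → Util A}
    (hu : ∀ j, u j ∈ U j) (hu' : ∀ j, u' j ∈ U j)
    (h : ∀ i, ∀ b ≠ x u, wtp (u i) (x u) - wtp (u i) b < wtp (u' i) (x u) - wtp (u' i) b) :
    x u' = x u := by
  suffices H : ∀ s : Finset I, x (s.piecewise u' u) = x u by
    simpa using H Finset.univ
  intro s
  induction s using Finset.induction_on with
  | empty => simp
  | insert i s hi ih =>
    by_contra hne
    have hmem : ∀ j, s.piecewise u' u j ∈ U j := fun j =>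
      s.piecewise_cases u' u (· ∈ U j) (hu' j) (hu j)
    have hmono := weak_monotonicity hpar hDSIC hIR hNS hmem i (hu' i)
    rw [← Finset.piecewise_insert, ih, Finset.piecewise_eq_of_notMem _ _ _ hi] at hmono
    linarith [h i _ hne]

end Mechanism

section Separation

variable [Fintype I]

lemma nsmul_mem_of_add_mem {M : Type*} [AddCommMonoid M] {L : Set M}
    (hadd : ∀ α ∈ L, ∀ β ∈ L, α + β ∈ L) {α : M} (hα : α ∈ L) {n : ℕ} (hn : 0 < n) :
    n • α ∈ L := by
  induction n, hn using Nat.le_induction with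
  | base => simpa using hα
  | succ n _ ih =>
    rw [succ_nsmul]
    exact hadd _ ih _ hα

/-- An open additive semigroup avoiding the origin lies strictly on one side of a hyperplane. -/
lemma exists_dual_neg_of_open_semigroup {E : Type*} [AddCommGroup E] [Module ℝ E]
    [TopologicalSpace E] [IsTopologicalAddGroup E] [ContinuousSMul ℝ E] {L : Set E}
    (hopen : IsOpen L) (hadd : ∀ α ∈ L, ∀ β ∈ L, α + β ∈ L) (h0 : (0 : E) ∉ L) :
    ∃ f : StrongDual ℝ E, ∀ α ∈ L, f α < 0 := by
  set S : Set E := {α | ∃ n : ℕ, 0 < n ∧ n • α ∈ L} with hS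
  have hSopen : IsOpen S := by
    have : S = ⋃ n : ℕ, ⋃ _ : 0 < n, (fun α : E => n • α) ⁻¹' L := by
      ext α
      simp [hS]
    rw [this]
    exact isOpen_iUnion fun n => isOpen_iUnion fun _ => hopen.preimage (continuous_const_smul n)
  have hSadd : ∀ α ∈ S, ∀ β ∈ S, α + β ∈ S := by
    rintro α ⟨n, hn, hα⟩ β ⟨m, hm, hβ⟩
    refine ⟨m * n, Nat.mul_pos hm hn, ?_⟩
    rw [nsmul_add, mul_nsmul' α, mul_comm m n, mul_nsmul' β]
    exact hadd _ (nsmul_mem_of_add_mem hadd hα hm) _ (nsmul_mem_of_add_mem hadd hβ hn)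
  have hSsmul : ∀ α ∈ S, ∀ c : ℝ, 0 < c → c • α ∈ S := by
    intro α hα c hc
    have hnhds : ∀ᶠ q : ℝ in nhds c, 0 < q ∧ (c / q) • α ∈ S := by
      refine (lt_mem_nhds hc).and ?_
      have hcont : ContinuousAt (fun q : ℝ => (c / q) • α) c :=
        (continuousAt_const.div continuousAt_id hc.ne').smul continuousAt_const
      refine hcont.eventually_mem (hSopen.mem_nhds ?_)
      simpa [div_self hc.ne'] using hα
    obtain ⟨_, ⟨hq, n, hn, hmem⟩, q, rfl⟩ :=
      (mem_closure_iff_nhds.1 (Rat.denseRange_cast (𝕜 := ℝ) c)) _ hnhds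
    have hq' : (0 : ℚ) < q := by exact_mod_cast hq
    have hnum : 0 < q.num.toNat := by simpa using hq'
    refine ⟨q.den * n, Nat.mul_pos q.pos hn, ?_⟩
    have hmem' := nsmul_mem_of_add_mem hadd hmem hnum
    convert hmem' using 1
    have hnum' : ((q.num.toNat : ℕ) : ℝ) = (q : ℝ) * q.den := by
      have : ((q.num.toNat : ℕ) : ℤ) = q.num := Int.toNat_of_nonneg (Rat.num_pos.2 hq').le
      have h2 : ((q.num.toNat : ℕ) : ℚ) = q * q.den := by
        rw [Rat.mul_den_eq_num]
        exact_mod_cast congrArg (Int.cast : ℤ → ℚ) this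
      exact_mod_cast h2
    simp only [← Nat.cast_smul_eq_nsmul ℝ, smul_smul]
    congr 1
    rw [hnum']
    push_cast
    field_simp
  have hconv : Convex ℝ S := by
    rw [convex_iff_forall_pos]
    intro α hα β hβ a b ha hb _
    exact hSadd _ (hSsmul α hα a ha) _ (hSsmul β hβ b hb)
  have hS0 : (0 : E) ∉ S := by
    rintro ⟨n, -, hn⟩
    exact h0 (by simpa using hn)
  obtain ⟨f, hf⟩ := geometric_hahn_banach_open_point hconv hSopen hS0
  refine ⟨f, fun α hα => ?_⟩
  simpa using hf α ⟨1, one_pos, by simpa using hα⟩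

/-- A nonempty, open, upward closed additive semigroup in `ℝ^I` avoiding the origin is strictly
positive for some nonzero nonnegative weight vector. -/
lemma exists_weights_pos {L : Set (I → ℝ)} (hopen : IsOpen L) (hne : L.Nonempty)
    (hadd : ∀ α ∈ L, ∀ β ∈ L, α + β ∈ L) (hup : IsUpperSet L) (h0 : (0 : I → ℝ) ∉ L) :
    ∃ k : I → ℝ, (∀ i, 0 ≤ k i) ∧ (∃ i, k i ≠ 0) ∧ ∀ α ∈ L, 0 < k ⬝ᵥ α := by
  classical
  obtain ⟨f, hf⟩ := exists_dual_neg_of_open_semigroup hopen hadd h0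
  have hrep : ∀ α : I → ℝ, (fun i => -f (Pi.single i 1)) ⬝ᵥ α = -f α := by
    intro α
    conv_rhs => rw [pi_eq_sum_univ' α, map_sum]
    simp only [dotProduct, map_smul, smul_eq_mul, neg_mul, Finset.sum_neg_distrib, neg_inj]
    refine Finset.sum_congr rfl fun i _ => ?_
    rw [mul_comm]
  obtain ⟨α, hα⟩ := hne
  refine ⟨fun i => -f (Pi.single i 1), fun i => ?_, ?_, fun β hβ => ?_⟩
  · by_contra! hneg
    have hpos : 0 < f (Pi.single i 1) := by linarith
    set c : ℝ := -f α / f (Pi.single i 1) with hc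
    have hc0 : 0 ≤ c := div_nonneg (by linarith [hf α hα]) hpos.le
    have hmem : α + c • Pi.single i (1 : ℝ) ∈ L := by
      refine hup (le_add_of_nonneg_right (smul_nonneg hc0 ?_)) hα
      exact Pi.single_nonneg.2 zero_le_one
    have := hf _ hmem
    rw [map_add, map_smul, smul_eq_mul, hc, div_mul_cancel₀ _ hpos.ne'] at this
    linarith
  · by_contra! hzero
    have h := hrep α
    rw [funext hzero, show (fun _ : I => (0 : ℝ)) = 0 from rfl, zero_dotProduct] at h
    linarith [hf α hα]
  · rw [hrep]
    linarith [hf β hβ]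

end Separation

/-- A total, onto choice correspondence on `(ℝ^A)^I` with positive association of differences. -/
structure IsPADRule (F : (I → A → ℝ) → A → Prop) : Prop where
  total : ∀ v, ∃ a, F v a
  onto : ∀ a, ∃ v, F v a
  pad : ∀ {v v' a c}, F v a → (∀ i, ∀ b ≠ a, v i a - v i b < v' i a - v' i b) → F v' c → c = a

/-- The vectors strictly exceeding some difference `v a - v b` at which `a` is chosen. -/
def thresholdSet (F : (I → A → ℝ) → A → Prop) (a b : A) : Set (I → ℝ) :=
  {α | ∃ v, F v a ∧ ∀ i, v i a - v i b < α i}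

lemma isUpperSet_thresholdSet (F : (I → A → ℝ) → A → Prop) (a b : A) :
    IsUpperSet (thresholdSet F a b) := by
  rintro α β hle ⟨v, hv, hlt⟩
  exact ⟨v, hv, fun i => (hlt i).trans_le (hle i)⟩

lemma isOpen_thresholdSet [Finite I] (F : (I → A → ℝ) → A → Prop) (a b : A) :
    IsOpen (thresholdSet F a b) := by
  have : thresholdSet F a b =
      ⋃ v, ⋃ _ : F v a, ⋂ i, {α : I → ℝ | v i a - v i b < α i} := by
    ext α
    simp [thresholdSet]
  rw [this]
  exact isOpen_iUnion fun v => isOpen_iUnion fun _ => isOpen_iInter_of_finite fun i =>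
    isOpen_lt continuous_const (continuous_apply i)

/-- An open set of vectors is stable under subtracting a small constant. -/
lemma exists_pos_sub_const_mem {s : Set (I → ℝ)} (hs : IsOpen s) {α : I → ℝ}
    (hα : α ∈ s) : ∃ ε > 0, α - Function.const I ε ∈ s := by
  have hcont : Continuous fun ε : ℝ => α - Function.const I ε := by
    refine continuous_pi fun i => ?_
    exact continuous_const.sub continuous_id
  have hmem : ∀ᶠ ε : ℝ in nhds 0, α - Function.const I ε ∈ s :=
    hcont.continuousAt.eventually_mem (hs.mem_nhds (by simpa using hα))
  obtain ⟨ε, hε, hpos⟩ :=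
    ((hmem.filter_mono nhdsWithin_le_nhds).and (self_mem_nhdsWithin (s := Set.Ioi (0 : ℝ)))).exists
  exact ⟨ε, hpos, hε⟩

namespace IsPADRule

variable {F : (I → A → ℝ) → A → Prop} {a b c d : A} {α β : I → ℝ}

lemma not_chosen (hF : IsPADRule F) (hab : a ≠ b) (hα : α ∈ thresholdSet F a b)
    {v : I → A → ℝ} (hv : ∀ i, α i ≤ v i a - v i b) : ¬ F v b := by
  classical
  intro hvb
  obtain ⟨w, hwa, hlt⟩ := hα
  set m : I → ℝ := fun i => (w i a - w i b + α i) / 2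
  set u : I → A → ℝ := fun i c => if c = a then m i else if c = b then 0 else
    min (m i - (w i a - w i c)) (-(v i b - v i c)) - 1 with hu
  have hua : ∀ i, u i a = m i := fun i => by simp [hu]
  have hub : ∀ i, u i b = 0 := fun i => by simp [hu, hab.symm]
  have huc : ∀ i c, c ≠ a → c ≠ b →
      u i c < m i - (w i a - w i c) ∧ u i c < -(v i b - v i c) := by
    intro i c hca hcb
    simp only [hu, if_neg hca, if_neg hcb]
    constructor
    · linarith [min_le_left (m i - (w i a - w i c)) (-(v i b - v i c))]
    · linarith [min_le_right (m i - (w i a - w i c)) (-(v i b - v i c))]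
  obtain ⟨e, he⟩ := hF.total u
  have hea : e = a := by
    refine hF.pad hwa (fun i c hca => ?_) he
    rcases eq_or_ne c b with rfl | hcb
    · rw [hua, hub]
      linarith [hlt i, show m i = (w i a - w i c + α i) / 2 from rfl]
    · rw [hua]
      linarith [(huc i c hca hcb).1]
  have heb : e = b := by
    refine hF.pad hvb (fun i c hcb => ?_) he
    rcases eq_or_ne c a with rfl | hca
    · rw [hua, hub]
      linarith [hlt i, hv i, show m i = (w i c - w i b + α i) / 2 from rfl]
    · rw [hub]
      linarith [(huc i c hca hcb).2]
  exact hab (hea.symm.trans heb)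

/-- Values on a nonempty set `s` of alternatives extend to a profile choosing only from `s`. -/
lemma exists_profile (hF : IsPADRule F) {s : Set A} (ha : a ∈ s) (g : I → A → ℝ) :
    ∃ v : I → A → ℝ, (∀ i, ∀ b ∈ s, v i b = g i b) ∧ ∃ b ∈ s, F v b := by
  classical
  obtain ⟨w, hw⟩ := hF.onto a
  set v : I → A → ℝ := fun i c => if c ∈ s then g i c else g i a - (w i a - w i c + 1) with hv
  have hvs : ∀ i, ∀ b ∈ s, v i b = g i b := fun i b hb => by simp [hv, hb]
  obtain ⟨b, hb⟩ := hF.total v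
  refine ⟨v, hvs, b, ?_, hb⟩
  by_contra hbs
  have hab : a ≠ b := fun h => hbs (h ▸ ha)
  refine hF.not_chosen hab (α := fun i => w i a - w i b + 1)
    ⟨w, hw, fun i => lt_add_one _⟩ (fun i => ?_) hb
  rw [hvs i a ha]
  simp [hv, hbs]

lemma not_forall_add_nonpos (hF : IsPADRule F) (hab : a ≠ b) (hα : α ∈ thresholdSet F a b)
    (hβ : β ∈ thresholdSet F b a) : ¬ ∀ i, α i + β i ≤ 0 := by
  intro h
  obtain ⟨v, hv, hlt⟩ := hβ
  exact hF.not_chosen hab hα (fun i => by linarith [h i, hlt i]) hv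

lemma mem_or_mem (hF : IsPADRule F) (hab : a ≠ b) (h : ∀ i, 0 < α i + β i) :
    α ∈ thresholdSet F a b ∨ β ∈ thresholdSet F b a := by
  classical
  obtain ⟨v, hv, e, he, hFe⟩ := hF.exists_profile (s := {a, b}) (a := a) (by simp)
    (fun i c => if c = a then (α i - β i) / 2 else 0)
  have hva : ∀ i, v i a = (α i - β i) / 2 := fun i => by simp [hv i a (by simp)]
  have hvb : ∀ i, v i b = 0 := fun i => by simp [hv i b (by simp), hab.symm]
  rcases he with rfl | rfl
  · exact Or.inl ⟨v, hFe, fun i => by rw [hva, hvb]; linarith [h i]⟩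
  · exact Or.inr ⟨v, hFe, fun i => by rw [hva, hvb]; linarith [h i]⟩

lemma nonempty_thresholdSet (hF : IsPADRule F) (a b : A) : (thresholdSet F a b).Nonempty := by
  obtain ⟨v, hv⟩ := hF.onto a
  exact ⟨fun i => v i a - v i b + 1, v, hv, fun i => lt_add_one _⟩

variable [Fintype I]

lemma add_mem (hF : IsPADRule F) (hab : a ≠ b) (hbc : b ≠ c) (hac : a ≠ c)
    (hα : α ∈ thresholdSet F a b) (hβ : β ∈ thresholdSet F b c) :
    α + β ∈ thresholdSet F a c := by
  classical
  obtain ⟨ε, hε, hα'⟩ := exists_pos_sub_const_mem (isOpen_thresholdSet F a b) hα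
  obtain ⟨v, hv, e, he, hFe⟩ := hF.exists_profile (s := {a, b, c}) (a := a) (by simp)
    (fun i d => if d = a then α i - ε + β i else if d = b then β i else 0)
  have hva : ∀ i, v i a = α i - ε + β i := fun i => by simp [hv i a (by simp)]
  have hvb : ∀ i, v i b = β i := fun i => by simp [hv i b (by simp), hab.symm]
  have hvc : ∀ i, v i c = 0 := fun i => by simp [hv i c (by simp), hac.symm, hbc.symm]
  rcases he with rfl | rfl | rfl
  · exact ⟨v, hFe, fun i => by rw [hva, hvc, Pi.add_apply]; linarith⟩
  · exact absurd hFe (hF.not_chosen hab hα' fun i => by simp [hva, hvb])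
  · exact absurd hFe (hF.not_chosen hbc hβ fun i => by simp [hvb, hvc])

lemma exists_const_mem (hF : IsPADRule F) (a b : A) :
    ∃ s : ℝ, Function.const I s ∈ thresholdSet F a b := by
  obtain ⟨α, hα⟩ := hF.nonempty_thresholdSet a b
  obtain ⟨s, hs⟩ := (Set.finite_range α).bddAbove
  exact ⟨s, isUpperSet_thresholdSet F a b (fun i => hs ⟨i, rfl⟩) hα⟩

/-- A scalar that is nearly critical for the pair `a, b` in both directions. -/
lemma exists_critical_const (hF : IsPADRule F) (hab : a ≠ b) {ε : ℝ} (hε : 0 < ε) :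
    ∃ s : ℝ, Function.const I (s + ε) ∈ thresholdSet F a b ∧
      Function.const I (-s + ε) ∈ thresholdSet F b a := by
  set T : Set ℝ := {s | Function.const I s ∈ thresholdSet F a b}
  have hne : T.Nonempty := hF.exists_const_mem a b
  obtain ⟨m, hm⟩ := hF.exists_const_mem b a
  have hbdd : BddBelow T := by
    refine ⟨-m, fun s hs => ?_⟩
    by_contra! hlt
    exact hF.not_forall_add_nonpos hab hs hm fun i => by simp; linarith
  refine ⟨sInf T, ?_, ?_⟩
  · obtain ⟨s, hs, hlt⟩ := exists_lt_of_csInf_lt hne (lt_add_of_pos_right (sInf T) hε)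
    exact isUpperSet_thresholdSet F a b (fun _ => hlt.le) hs
  · refine (hF.mem_or_mem hab (α := Function.const I (sInf T - ε / 2)) fun i => ?_).resolve_left ?_
    · simp only [Function.const_apply]
      linarith
    · intro h
      linarith [csInf_le hbdd h]

open scoped Pointwise in
lemma thresholdSet_add_subset_replace (hF : IsPADRule F) (hab : a ≠ b) (hcb : c ≠ b) :
    thresholdSet F a b + thresholdSet F b a ⊆ thresholdSet F c b + thresholdSet F b c := by
  rcases eq_or_ne a c with rfl | hac
  · exact subset_rfl
  rintro _ ⟨β, hβ, γ, hγ, rfl⟩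
  obtain ⟨ε₁, hε₁, hβ'⟩ := exists_pos_sub_const_mem (isOpen_thresholdSet F a b) hβ
  obtain ⟨ε₂, hε₂, hγ'⟩ := exists_pos_sub_const_mem (isOpen_thresholdSet F b a) hγ
  obtain ⟨s, hs, hs'⟩ := hF.exists_critical_const hac (lt_min hε₁ hε₂)
  refine ⟨_, isUpperSet_thresholdSet F c b ?_ (hF.add_mem hac.symm hab hcb hs' hβ'),
    _, isUpperSet_thresholdSet F b c ?_ (hF.add_mem hab.symm hac hcb.symm hγ' hs),
    (?_ : β - Function.const I s + (γ + Function.const I s) = β + γ)⟩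
  · intro i
    simp only [Pi.add_apply, Pi.sub_apply, Function.const_apply]
    linarith [min_le_left ε₁ ε₂]
  · intro i
    simp only [Pi.add_apply, Pi.sub_apply, Function.const_apply]
    linarith [min_le_right ε₁ ε₂]
  · abel

open scoped Pointwise in
/-- The sums over two-cycles form the same set for every pair of alternatives. -/
lemma thresholdSet_add_subset (hF : IsPADRule F) (hab : a ≠ b) (hcd : c ≠ d) :
    thresholdSet F a b + thresholdSet F b a ⊆ thresholdSet F c d + thresholdSet F d c := by
  rcases eq_or_ne c b with rfl | hcb
  · rw [add_comm (thresholdSet F c d)]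
    exact hF.thresholdSet_add_subset_replace hab hcd.symm
  · refine (hF.thresholdSet_add_subset_replace hab hcb).trans ?_
    rw [add_comm, add_comm (thresholdSet F c d)]
    exact hF.thresholdSet_add_subset_replace hcb.symm hcd.symm

/-- Weights that are positive on the sums over two-cycles. -/
lemma exists_weights (hF : IsPADRule F) (hab : a ≠ b) (hca : c ≠ a) (hcb : c ≠ b) :
    ∃ k : I → ℝ, (∀ i, 0 ≤ k i) ∧ (∃ i, k i ≠ 0) ∧
      ∀ d e, d ≠ e → ∀ α ∈ thresholdSet F d e, ∀ β ∈ thresholdSet F e d,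
        0 < k ⬝ᵥ α + k ⬝ᵥ β := by
  open scoped Pointwise in
  obtain ⟨k, hk, hk0, hpos⟩ := exists_weights_pos
    (L := thresholdSet F a c + thresholdSet F c a)
    (isOpen_thresholdSet F a c).add_right
    ((hF.nonempty_thresholdSet a c).add (hF.nonempty_thresholdSet c a))
    (by
      intro α hα _ ⟨β', hβ', γ', hγ', h⟩
      obtain ⟨β, hβ, γ, hγ, rfl⟩ := hF.thresholdSet_add_subset hca.symm hab hα
      subst h
      refine ⟨β + (γ + β'), hF.add_mem hab hcb.symm hca.symm hβ
        (hF.add_mem hab.symm hca.symm hcb.symm hγ hβ'), γ', hγ', ?_⟩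
      simp only
      abel)
    (by
      rintro _ δ hle ⟨β, hβ, γ, hγ, rfl⟩
      refine ⟨β, hβ, δ - β, isUpperSet_thresholdSet F c a ?_ hγ, add_sub_cancel _ _⟩
      exact le_sub_iff_add_le'.2 hle)
    (by
      rintro ⟨β, hβ, γ, hγ, h⟩
      exact hF.not_forall_add_nonpos hca.symm hβ hγ fun i => (congrFun h i).le)
  refine ⟨k, hk, hk0, fun d e hde α hα β hβ => ?_⟩
  rw [← dotProduct_add]
  exact hpos _ (hF.thresholdSet_add_subset hde hca.symm ⟨α, hα, β, hβ, rfl⟩)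

/-- Weights positive on two-cycles come with a potential bounding the weighted thresholds. -/
lemma exists_potential (hF : IsPADRule F) [Nonempty A] {k : I → ℝ}
    (hpos : ∀ d e, d ≠ e → ∀ α ∈ thresholdSet F d e, ∀ β ∈ thresholdSet F e d,
      0 < k ⬝ᵥ α + k ⬝ᵥ β) :
    ∃ C : A → ℝ, ∀ a b, a ≠ b → ∀ α ∈ thresholdSet F a b, C b - C a ≤ k ⬝ᵥ α := by
  classical
  obtain ⟨o⟩ := ‹Nonempty A›
  set m : A → ℝ := fun b => sInf ((k ⬝ᵥ ·) '' thresholdSet F o b)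
  have hle : ∀ b, o ≠ b → ∀ α ∈ thresholdSet F o b, m b ≤ k ⬝ᵥ α := by
    intro b hob α hα
    refine csInf_le ?_ ⟨α, hα, rfl⟩
    obtain ⟨β, hβ⟩ := hF.nonempty_thresholdSet b o
    refine ⟨-(k ⬝ᵥ β), ?_⟩
    rintro _ ⟨γ, hγ, rfl⟩
    simp only
    linarith [hpos o b hob γ hγ β hβ]
  have hge : ∀ b (r : ℝ), (∀ α ∈ thresholdSet F o b, r ≤ k ⬝ᵥ α) → r ≤ m b := by
    intro b r h
    refine le_csInf ((hF.nonempty_thresholdSet o b).image _) ?_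
    rintro _ ⟨γ, hγ, rfl⟩
    exact h γ hγ
  refine ⟨fun b => if b = o then 0 else m b, fun a b hab α hα => ?_⟩
  rcases eq_or_ne a o with rfl | hao
  · simpa [hab.symm] using hle b hab α hα
  rcases eq_or_ne b o with rfl | hbo
  · have : -(k ⬝ᵥ α) ≤ m a := hge a _ fun β hβ => by
      linarith [hpos a b hab α hα β hβ]
    simp only [if_neg hao, if_true]
    linarith
  · have : m b - k ⬝ᵥ α ≤ m a := hge a _ fun β hβ => by
      have := hle b hbo.symm _ (hF.add_mem hao.symm hab hbo.symm hβ hα)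
      rw [dotProduct_add] at this
      linarith
    simp only [if_neg hao, if_neg hbo]
    linarith

/-- **Roberts' theorem** for choice correspondences with positive association of differences. -/
theorem exists_affine_maximizer (hF : IsPADRule F) [Fintype A] (hA : 3 ≤ Fintype.card A) :
    ∃ (k : I → ℝ) (C : A → ℝ), (∀ i, 0 ≤ k i) ∧ (∃ i, k i ≠ 0) ∧
      ∀ v a, F v a → ∀ b, C b - C a ≤ ∑ i, k i * (v i a - v i b) := by
  obtain ⟨a₁, a₂, a₃, h12, h13, h23⟩ := Fintype.two_lt_card_iff.1 hA
  have : Nonempty A := ⟨a₁⟩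
  obtain ⟨k, hk, hk0, hpos⟩ := hF.exists_weights h12 h13.symm h23.symm
  obtain ⟨C, hC⟩ := hF.exists_potential hpos
  refine ⟨k, C, hk, hk0, fun v a hva b => ?_⟩
  rcases eq_or_ne a b with rfl | hab
  · simp
  have hcont : Continuous fun ε : ℝ => k ⬝ᵥ fun i => v i a - v i b + ε := by
    unfold dotProduct
    fun_prop
  have hlim := (hcont.tendsto 0).mono_left (nhdsWithin_le_nhds (s := Set.Ioi 0))
  have := ge_of_tendsto hlim (Filter.eventually_of_mem self_mem_nhdsWithin fun ε hε =>
    hC a b hab _ ⟨v, hva, fun i => lt_add_of_pos_right _ hε⟩)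
  simpa [dotProduct] using this

end IsPADRule

/-- The choices made at willingness-to-pay profiles agreeing with `v` up to agent-wise constants
form a correspondence with positive association of differences. -/
lemma isPADRule_of_mechanism [Fintype A] [Nonempty A] [Fintype I] [DecidableEq I]
    {U : I → Set (Util A)} (hpar : ∀ i, ∀ u ∈ U i, IsParallel u)
    (hunr : ∀ i, UnrestrictedWTP (U i)) {x : (I → Util A) → A} {t : (I → Util A) → I → ℝ}
    (hDSIC : DSIC U x t) (hOnto : OntoMech U x) (hIR : IR U x t) (hNS : NoSubsidy U t) :
    IsPADRule fun (v : I → A → ℝ) a => ∃ u : I → Util A, (∀ j, u j ∈ U j) ∧ x u = a ∧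
      ∀ i b c, wtp (u i) b - wtp (u i) c = v i b - v i c where
  total v := by
    have h : ∀ i, ∃ w ∈ U i, ∀ b c, wtp w b - wtp w c = v i b - v i c := by
      intro i
      obtain ⟨o, ho⟩ := Finite.exists_min (v i)
      obtain ⟨w, hw, hwv⟩ := hunr i (fun a => v i a - v i o) (fun a => sub_nonneg.2 (ho a))
        ⟨o, sub_self _⟩
      exact ⟨w, hw, fun b c => by rw [hwv, hwv]; ring⟩
    choose u hu huv using h
    exact ⟨x u, u, hu, rfl, huv⟩
  onto a := by
    obtain ⟨u, hu, hx⟩ := hOnto a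
    exact ⟨fun i => wtp (u i), u, hu, hx, fun _ _ _ => rfl⟩
  pad := by
    rintro v v' _ _ ⟨u, hu, rfl, huv⟩ h ⟨u', hu', rfl, huv'⟩
    refine positive_association hpar hDSIC hIR hNS hu hu' fun i b hb => ?_
    rw [huv, huv']
    exact h i b hb

/-- Roberts' theorem on parallel domains. With `|A| ≥ 3` and an
unrestricted parallel utility domain, every DSIC, deterministic, onto, IR, no-subsidy
mechanism has a choice rule that is an affine maximizer of agents' willingness to pay. -/
theorem roberts_parallel
    [Fintype A] [Nonempty A] [Fintype I] [DecidableEq I]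
    (hA : 3 ≤ Fintype.card A)
    (U : I → Set (Util A))
    (hpar : ∀ i, ∀ u ∈ U i, IsParallel u)
    (hunr : ∀ i, UnrestrictedWTP (U i))
    (x : (I → Util A) → A) (t : (I → Util A) → I → ℝ)
    (hDSIC : DSIC U x t) (hOnto : OntoMech U x)
    (hIR : IR U x t) (hNS : NoSubsidy U t) :
    ∃ (k : I → ℝ) (C : A → ℝ), (∀ i, 0 ≤ k i) ∧ (∃ i, k i ≠ 0) ∧
      ∀ u : I → Util A, (∀ j, u j ∈ U j) → ∀ b : A,
        (∑ i, k i * wtp (u i) b) + C b ≤ (∑ i, k i * wtp (u i) (x u)) + C (x u) := by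
  obtain ⟨k, C, hk, hk0, hmax⟩ :=
    (isPADRule_of_mechanism hpar hunr hDSIC hOnto hIR hNS).exists_affine_maximizer hA
  refine ⟨k, C, hk, hk0, fun u hu b => ?_⟩
  have h := hmax (fun i => wtp (u i)) (x u) ⟨u, hu, rfl, fun _ _ _ => rfl⟩ b
  simp only [mul_sub, Finset.sum_sub_distrib] at h
  linarith

end NQLSC
end
end

section
/- (Two-slopes dictatorship.) Suppose |A| ≥ 3 and the type domain 𝒰 = ∏_{i=1}^n U_i is such that for each agent i, U_i contains an unrestricted linear domain with two slopes. Then every social choice mechanism on 𝒰 that is DSIC, deterministic and onto is a fixed price dictatorship: there exist an agent i* and fixed prices z ∈ ℝ^A such that for every u ∈ 𝒰, x(u) ∈ argmax_{a∈A} u_{i*,a}(z_a) and t_{i*}(u) = z_{x(u)}. -/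
/-!
Common framework: agents indexed by `I`, alternatives `A` (finite, nonempty).
A type of an agent is a family `u : A → ℝ → ℝ`, where `u a z` is the utility
when alternative `a` is selected and the agent pays `z`.
-/

noncomputable section

namespace NQLSC

variable {A I : Type*}

/-- An open, upward closed sub-semigroup of `ℝ^I` omitting `0` and containing, up to arbitrarily
small perturbations, one of `d` and `-d`, contains the open half-space of a nonnegative nonzero
weight vector. -/
lemma exists_weights_of_semigroup [Fintype I] (C : Set (I → ℝ))
    (hup : ∀ d ∈ C, ∀ e, (∀ i, d i ≤ e i) → e ∈ C)
    (hsub : ∀ d ∈ C, ∃ ε > 0, (fun i => d i - ε) ∈ C)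
    (hadd : ∀ d ∈ C, ∀ e ∈ C, d + e ∈ C)
    (hpos : ∀ ε : ℝ, 0 < ε → (fun _ => ε) ∈ C)
    (hzero : (0 : I → ℝ) ∉ C)
    (hcompl : ∀ d, d ∉ C → ∀ ε : ℝ, 0 < ε → (fun i => -d i + ε) ∈ C) :
    ∃ w : I → ℝ, (∀ i, 0 ≤ w i) ∧ (∃ i, 0 < w i) ∧
      ∀ d, d ∉ C → ∑ i, w i * d i ≤ 0 := by
  classical
  have hopen : IsOpen C := by
    rw [Metric.isOpen_iff]
    intro d hd
    obtain ⟨ε, hε, hdε⟩ := hsub d hd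
    refine ⟨ε, hε, fun e he => hup _ hdε e fun i => ?_⟩
    have h := (dist_pi_lt_iff hε).1 (Metric.mem_ball.1 he) i
    rw [Real.dist_eq, abs_lt] at h
    linarith [h.1]
  have hnat : ∀ n : ℕ, ∀ d ∈ C, ((n : ℝ) + 1) • d ∈ C := by
    intro n d hd
    induction n with
    | zero => simpa using hd
    | succ n ih =>
      have := hadd _ ih _ hd
      rw [show ((n + 1 : ℕ) : ℝ) + 1 = ((n : ℝ) + 1) + 1 by push_cast; ring, add_smul, one_smul]
      exact this
  have hdiv : ∀ n : ℕ, ∀ d ∈ C, ((n : ℝ) + 1)⁻¹ • d ∈ C := by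
    intro n d hd
    by_contra hn
    have hn0 : (0 : ℝ) < (n : ℝ) + 1 := by positivity
    obtain ⟨ε, hε, hdε⟩ := hsub d hd
    have h := hadd _ (hnat n _ (hcompl _ hn (((n : ℝ) + 1)⁻¹ * ε) (by positivity))) _ hdε
    refine hzero (hup _ h _ fun i => le_of_eq ?_)
    simp only [Pi.add_apply, Pi.smul_apply, smul_eq_mul, Pi.zero_apply]
    field_simp
    ring
  have hrat : ∀ q : ℚ, 0 < q → ∀ d ∈ C, (q : ℝ) • d ∈ C := by
    intro q hq d hd
    obtain ⟨m, hm⟩ := Int.eq_succ_of_zero_lt (Rat.num_pos.2 hq)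
    obtain ⟨n, hn⟩ := Nat.exists_eq_succ_of_ne_zero q.den_nz
    have := hnat m _ (hdiv n d hd)
    rw [smul_smul] at this
    rw [Rat.cast_def, hm, hn, div_eq_mul_inv]
    exact_mod_cast this
  have hsmul : ∀ r : ℝ, 0 < r → ∀ d ∈ C, r • d ∈ C := by
    intro r hr d hd
    have hcont : Filter.Tendsto (fun q : ℝ => (r / q) • d) (nhds r) (nhds d) := by
      have : ContinuousAt (fun q : ℝ => (r / q) • d) r := by
        have := hr.ne'
        fun_prop (disch := assumption)
      simpa [ContinuousAt, div_self hr.ne'] using this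
    have hev := (hcont.eventually (hopen.mem_nhds hd)).and (lt_mem_nhds hr)
    obtain ⟨_, ⟨q, rfl⟩, hqC, hq⟩ := Rat.isDenseEmbedding_coe_real.dense.inter_nhds_nonempty hev
    have := hrat q (Rat.cast_pos.1 hq) _ hqC
    rwa [smul_smul, mul_div_cancel₀ _ hq.ne'] at this
  have hconv : Convex ℝ C := by
    rw [convex_iff_forall_pos]
    intro d hd e he a b ha hb _
    exact hadd _ (hsmul a ha d hd) _ (hsmul b hb e he)
  obtain ⟨g, hg⟩ := geometric_hahn_banach_open_point hconv hopen hzero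
  have hgC : ∀ d ∈ C, 0 < ∑ i, -g (Pi.single i 1) * d i := by
    intro d hd
    have h := hg d hd
    rw [map_zero, ← ContinuousLinearMap.coe_coe, LinearMap.pi_apply_eq_sum_univ] at h
    simp only [smul_eq_mul, ContinuousLinearMap.coe_coe] at h
    simp only [neg_mul, Finset.sum_neg_distrib, neg_pos]
    convert h using 2
    rename_i i _
    rw [mul_comm]
    congr 2
    ext j
    simp [Pi.single_apply, eq_comm]
  generalize hw : (fun i => -g (Pi.single i 1)) = w
  replace hgC : ∀ d ∈ C, 0 < ∑ i, w i * d i := by rw [← hw]; exact hgC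
  have hsum : 0 < ∑ i, w i := by simpa using hgC _ (hpos 1 one_pos)
  have hle : ∀ r : ℝ, (∀ ε > 0, 0 < r + ε * ∑ i, w i) → 0 ≤ r := by
    intro r h
    by_contra! hr
    have := h (-r / ∑ i, w i) (div_pos (neg_pos.2 hr) hsum)
    rw [div_mul_cancel₀ _ hsum.ne'] at this
    linarith
  refine ⟨w, fun i => hle _ fun ε hε => ?_, ?_, fun d hd => ?_⟩
  · have := hgC (fun j => (Pi.single i 1 : I → ℝ) j + ε)
      (hup _ (hpos ε hε) _ fun j => by
        simp only [le_add_iff_nonneg_left, Pi.single_apply]; split_ifs <;> norm_num)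
    simpa [mul_add, Finset.sum_add_distrib, Pi.single_apply, Finset.mul_sum, mul_comm] using this
  · by_contra! h
    exact hsum.not_ge (Finset.sum_nonpos fun i _ => h i)
  · rw [← neg_nonneg]
    refine hle _ fun ε hε => ?_
    have := hgC _ (hcompl d hd ε hε)
    simpa [mul_add, Finset.sum_add_distrib, Finset.mul_sum, mul_comm] using this

/-- Positive association of differences: the chosen alternative stays chosen when every agent's
value for it strictly increases relative to her values for all other alternatives. -/
def PosAssoc (f : (I → A → ℝ) → A) : Prop :=
  ∀ v v' : I → A → ℝ, (∀ i b, b ≠ f v → v' i b - v i b < v' i (f v) - v i (f v)) → f v' = f v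

lemma PosAssoc.ne {f : (I → A → ℝ) → A} (hf : PosAssoc f) {v v' : I → A → ℝ} {a b : A}
    (hab : a ≠ b) (ha : f v = a) (h : ∀ i, v i a - v i b < v' i a - v' i b) : f v' ≠ b := by
  classical
  intro hb
  let m : I → ℝ := fun i => ((v i a - v i b) + (v' i a - v' i b)) / 2
  let w : I → A → ℝ := fun i c => if c = a then m i else if c = b then 0 else
    min (v i c + m i - v i a) (v' i c - v' i b) - 1
  have hwa : f w = f v := by
    refine hf v w fun i c hc => ?_
    rw [ha] at hc ⊢
    have := h i
    by_cases hcb : c = b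
    · subst hcb
      simp only [w, m, if_neg hc, if_true]
      linarith
    · have := min_le_left (v i c + m i - v i a) (v' i c - v' i b)
      simp only [w, if_neg hc, if_neg hcb, if_true]
      linarith
  have hwb : f w = f v' := by
    refine hf v' w fun i c hc => ?_
    rw [hb] at hc ⊢
    have := h i
    by_cases hca : c = a
    · subst hca
      simp only [w, m, if_neg hab.symm, if_true]
      linarith
    · have := min_le_right (v i c + m i - v i a) (v' i c - v' i b)
      simp only [w, if_neg hc, if_neg hca, if_neg hab.symm, if_true]
      linarith
  exact hab (by rw [← ha, ← hb, ← hwa, ← hwb])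

/-- Values can be prescribed on a set `B` of alternatives while making the choice fall in `B`. -/
lemma PosAssoc.exists_mem {f : (I → A → ℝ) → A} (hf : PosAssoc f)
    (honto : Function.Surjective f) {B : Set A} {a : A} (ha : a ∈ B) (y : I → A → ℝ) :
    ∃ v : I → A → ℝ, (∀ i, ∀ c ∈ B, v i c = y i c) ∧ f v ∈ B := by
  classical
  obtain ⟨w, hw⟩ := honto a
  refine ⟨fun i c => if c ∈ B then y i c else y i a - (w i a - w i c) - 1,
    fun i c hc => if_pos hc, ?_⟩
  by_contra hB
  refine hf.ne (ne_of_mem_of_not_mem ha hB) hw (fun i => ?_) rfl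
  simp only [if_pos ha, if_neg hB]
  linarith

/-- The difference vectors at which `a` robustly beats `b`. -/
def Beats (f : (I → A → ℝ) → A) (a b : A) : Set (I → ℝ) :=
  {d | ∃ v : I → A → ℝ, ∃ ε > 0, f v = a ∧ ∀ i, v i a - v i b + ε ≤ d i}

section Beats

variable {f : (I → A → ℝ) → A} {a b c : A}

lemma Beats.mono {d e : I → ℝ} (hd : d ∈ Beats f a b) (h : ∀ i, d i ≤ e i) : e ∈ Beats f a b := by
  obtain ⟨v, ε, hε, hv, hvd⟩ := hd
  exact ⟨v, ε, hε, hv, fun i => (hvd i).trans (h i)⟩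

lemma Beats.exists_sub {d : I → ℝ} (hd : d ∈ Beats f a b) :
    ∃ ε > 0, (fun i => d i - ε) ∈ Beats f a b := by
  obtain ⟨v, ε, hε, hv, hvd⟩ := hd
  exact ⟨ε / 2, half_pos hε, v, ε / 2, half_pos hε, hv, fun i => by linarith [hvd i]⟩

lemma Beats.ne (hf : PosAssoc f) (hab : a ≠ b) {v : I → A → ℝ}
    (hd : (fun i => v i a - v i b) ∈ Beats f a b) : f v ≠ b := by
  obtain ⟨w, ε, hε, hw, hwd⟩ := hd
  exact hf.ne hab hw fun i => by linarith [hwd i]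

lemma Beats.neg_notMem (hf : PosAssoc f) (hab : a ≠ b) {d e : I → ℝ} (hd : d ∈ Beats f a b)
    (he : ∀ i, e i ≤ -d i) : e ∉ Beats f b a := by
  rintro ⟨v, ε, hε, hv, hvd⟩
  refine Beats.ne hf hab (v := v) (Beats.mono hd fun i => ?_) hv
  linarith [hvd i, he i]

lemma Beats.neg_add_mem (hf : PosAssoc f) (honto : Function.Surjective f) (hab : a ≠ b)
    {d : I → ℝ} (hd : d ∉ Beats f a b) {ε : ℝ} (hε : 0 < ε) :
    (fun i => -d i + ε) ∈ Beats f b a := by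
  classical
  obtain ⟨v, hv, hfv⟩ := hf.exists_mem honto (B := {a, b}) (a := a) (by simp)
    (fun i c => if c = a then d i - ε / 2 else 0)
  have hva : ∀ i, v i a = d i - ε / 2 := fun i => by rw [hv i a (by simp), if_pos rfl]
  have hvb : ∀ i, v i b = 0 := fun i => by rw [hv i b (by simp), if_neg hab.symm]
  rcases hfv with h | h
  · exact absurd ⟨v, ε / 2, half_pos hε, h, fun i => by rw [hva, hvb]; linarith⟩ hd
  · exact ⟨v, ε / 2, half_pos hε, h, fun i => by rw [hva, hvb]; linarith⟩

lemma Beats.add (hf : PosAssoc f) (honto : Function.Surjective f) (hab : a ≠ b) (hbc : b ≠ c)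
    (hac : a ≠ c) {d e : I → ℝ} (hd : d ∈ Beats f a b) (he : e ∈ Beats f b c) :
    d + e ∈ Beats f a c := by
  classical
  obtain ⟨ε, hε, hd'⟩ := Beats.exists_sub hd
  obtain ⟨v, hv, hfv⟩ := hf.exists_mem honto (B := {a, b, c}) (a := a) (by simp)
    (fun i x => if x = a then d i - ε else if x = b then 0 else -e i)
  have hva : ∀ i, v i a = d i - ε := fun i => by rw [hv i a (by simp), if_pos rfl]
  have hvb : ∀ i, v i b = 0 := fun i => by
    rw [hv i b (by simp), if_neg hab.symm, if_pos rfl]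
  have hvc : ∀ i, v i c = -e i := fun i => by
    rw [hv i c (by simp), if_neg hac.symm, if_neg hbc.symm]
  rcases hfv with h | h | h
  · exact ⟨v, ε, hε, h, fun i => by simp [hva, hvc]; linarith⟩
  · exact absurd h (Beats.ne hf hab (by simpa [hva, hvb] using hd'))
  · exact absurd h (Beats.ne hf hbc (by simpa [hvc, hvb] using he))

/-- The smallest uniform advantage at which `a` beats `b`. -/
def margin (f : (I → A → ℝ) → A) (a b : A) : ℝ :=
  sInf {r : ℝ | (fun _ => r) ∈ Beats f a b}

lemma exists_const_mem_beats [Finite I] (honto : Function.Surjective f) (a b : A) :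
    ∃ r : ℝ, (fun _ => r) ∈ Beats f a b := by
  obtain ⟨v, hv⟩ := honto a
  obtain ⟨M, hM⟩ := Set.finite_range (fun i => v i a - v i b) |>.bddAbove
  exact ⟨M + 1, v, 1, one_pos, hv, fun i => by linarith [hM (Set.mem_range_self i)]⟩

lemma bddBelow_const_beats [Finite I] (hf : PosAssoc f) (honto : Function.Surjective f)
    (hab : a ≠ b) : BddBelow {r : ℝ | (fun _ => r) ∈ Beats f a b} := by
  obtain ⟨r, hr⟩ := exists_const_mem_beats honto b a
  refine ⟨-r, fun s hs => ?_⟩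
  by_contra! h
  exact Beats.neg_notMem hf hab hs (fun _ => by linarith) hr

lemma const_mem_beats_of_margin_lt [Finite I] (honto : Function.Surjective f) {r : ℝ}
    (hr : margin f a b < r) : (fun _ => r) ∈ Beats f a b := by
  obtain ⟨s, hs, hsr⟩ := exists_lt_of_csInf_lt (exists_const_mem_beats honto a b) hr
  exact Beats.mono hs fun _ => hsr.le

lemma const_notMem_beats_of_lt_margin [Finite I] (hf : PosAssoc f)
    (honto : Function.Surjective f) (hab : a ≠ b) {r : ℝ} (hr : r < margin f a b) :
    (fun _ => r) ∉ Beats f a b :=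
  fun h => hr.not_ge (csInf_le (bddBelow_const_beats hf honto hab) h)

lemma margin_swap [Finite I] (hf : PosAssoc f) (honto : Function.Surjective f) (hab : a ≠ b) :
    margin f b a = -margin f a b := by
  rcases lt_trichotomy (margin f b a) (-margin f a b) with h | h | h
  · obtain ⟨r, h₁, h₂⟩ := exists_between h
    refine absurd (const_mem_beats_of_margin_lt honto h₁) (Beats.neg_notMem hf hab
      (const_mem_beats_of_margin_lt honto (lt_neg.1 h₂)) fun _ => by simp)
  · exact h
  · obtain ⟨r, h₁, h₂⟩ := exists_between h
    obtain ⟨s, h₃, h₄⟩ := exists_between h₂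
    refine absurd ?_ (const_notMem_beats_of_lt_margin hf honto hab.symm h₄)
    have := Beats.neg_add_mem hf honto hab
      (const_notMem_beats_of_lt_margin hf honto hab (neg_lt.1 h₁)) (sub_pos.2 h₃)
    simpa using this

lemma margin_le_add [Finite I] (hf : PosAssoc f) (honto : Function.Surjective f)
    (hab : a ≠ b) (hbc : b ≠ c) (hac : a ≠ c) :
    margin f a c ≤ margin f a b + margin f b c := by
  refine le_of_forall_pos_le_add fun ε hε => ?_
  refine csInf_le (bddBelow_const_beats hf honto hac) ?_
  refine Beats.mono (Beats.add hf honto hab hbc hac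
    (const_mem_beats_of_margin_lt honto (lt_add_of_pos_right _ (half_pos hε)))
    (const_mem_beats_of_margin_lt honto (lt_add_of_pos_right _ (half_pos hε)))) fun i => ?_
  simp only [Pi.add_apply]
  linarith

lemma margin_add [Finite I] (hf : PosAssoc f) (honto : Function.Surjective f)
    (hab : a ≠ b) (hbc : b ≠ c) (hac : a ≠ c) :
    margin f a b + margin f b c = margin f a c := by
  have h := margin_le_add hf honto hbc.symm hab.symm hac.symm
  rw [margin_swap hf honto hab, margin_swap hf honto hbc, margin_swap hf honto hac] at h
  linarith [margin_le_add hf honto hab hbc hac]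

/-- The difference vectors at which `a` beats `b`, normalised by the margin. -/
def NormBeats (f : (I → A → ℝ) → A) (a b : A) : Set (I → ℝ) :=
  {d | (fun i => d i + margin f a b) ∈ Beats f a b}

lemma NormBeats.exists_sub {d : I → ℝ} (hd : d ∈ NormBeats f a b) :
    ∃ ε > 0, (fun i => d i - ε) ∈ NormBeats f a b := by
  obtain ⟨ε, hε, h⟩ := Beats.exists_sub hd
  exact ⟨ε, hε, Beats.mono h fun i => by linarith⟩

lemma const_mem_normBeats [Finite I] (honto : Function.Surjective f) {ε : ℝ} (hε : 0 < ε) :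
    (fun _ => ε) ∈ NormBeats f a b :=
  const_mem_beats_of_margin_lt honto (by linarith)

lemma NormBeats.add [Finite I] (hf : PosAssoc f) (honto : Function.Surjective f)
    (hab : a ≠ b) (hbc : b ≠ c) (hac : a ≠ c) {d e : I → ℝ}
    (hd : d ∈ NormBeats f a b) (he : e ∈ NormBeats f b c) : d + e ∈ NormBeats f a c := by
  refine Beats.mono (Beats.add hf honto hab hbc hac hd he) fun i => ?_
  simp only [Pi.add_apply, ← margin_add hf honto hab hbc hac]
  linarith

lemma NormBeats.change_right [Finite I] (hf : PosAssoc f) (honto : Function.Surjective f)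
    (hab : a ≠ b) (hac : a ≠ c) {d : I → ℝ} (hd : d ∈ NormBeats f a b) :
    d ∈ NormBeats f a c := by
  by_cases hbc : b = c
  · exact hbc ▸ hd
  obtain ⟨ε, hε, h⟩ := NormBeats.exists_sub hd
  convert NormBeats.add hf honto hab hbc hac h (const_mem_normBeats honto hε) using 1
  ext i
  simp

lemma NormBeats.change_left [Finite I] (hf : PosAssoc f) (honto : Function.Surjective f)
    (hab : a ≠ b) (hcb : c ≠ b) {d : I → ℝ} (hd : d ∈ NormBeats f a b) :
    d ∈ NormBeats f c b := by
  by_cases hca : c = a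
  · exact hca ▸ hd
  obtain ⟨ε, hε, h⟩ := NormBeats.exists_sub hd
  convert NormBeats.add hf honto hca hab hcb (const_mem_normBeats honto hε) h using 1
  ext i
  simp

end Beats

lemma exists_ne_ne [Fintype A] (hA : 3 ≤ Fintype.card A) (a b : A) : ∃ c, c ≠ a ∧ c ≠ b := by
  classical
  obtain ⟨c, hc⟩ := Finset.exists_mem_notMem_of_card_lt_card (s := {a, b}) (t := Finset.univ)
    (Finset.card_le_two.trans_lt (by rw [Finset.card_univ]; omega))
  exact ⟨c, by simpa using hc⟩

lemma NormBeats.change [Fintype A] [Finite I] (hA : 3 ≤ Fintype.card A)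
    {f : (I → A → ℝ) → A} (hf : PosAssoc f) (honto : Function.Surjective f) {a b c e : A}
    (hab : a ≠ b) (hce : c ≠ e) {d : I → ℝ} (hd : d ∈ NormBeats f a b) :
    d ∈ NormBeats f c e := by
  by_cases hea : a = e
  · subst hea
    obtain ⟨g, hga, hgc⟩ := exists_ne_ne hA a c
    exact NormBeats.change_right hf honto hgc.symm hce (NormBeats.change_left hf honto hga.symm
      hgc.symm (NormBeats.change_right hf honto hab hga.symm hd))
  · exact NormBeats.change_left hf honto hea hce (NormBeats.change_right hf honto hab hea hd)

/-- Roberts' theorem: a surjective choice rule with positive association of differences on the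
unrestricted domain maximises a weighted welfare. -/
theorem PosAssoc.exists_weights [Fintype A] [Fintype I] (hA : 3 ≤ Fintype.card A)
    {f : (I → A → ℝ) → A} (hf : PosAssoc f) (honto : Function.Surjective f) :
    ∃ (w : I → ℝ) (γ : A → A → ℝ), (∀ i, 0 ≤ w i) ∧ (∃ i, 0 < w i) ∧
      (∀ a b, a ≠ b → γ b a = -γ a b) ∧
      ∀ v b, b ≠ f v → γ (f v) b ≤ ∑ i, w i * (v i (f v) - v i b) := by
  obtain ⟨a, b, hab⟩ : ∃ a b : A, a ≠ b :=
    Fintype.one_lt_card_iff.1 (show 1 < Fintype.card A by omega)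
  obtain ⟨c, hca, hcb⟩ := exists_ne_ne hA a b
  have hneg : ∀ d ∈ NormBeats f a b, ∀ e : I → ℝ, (∀ i, e i ≤ -d i) → e ∉ NormBeats f b a := by
    intro d hd e he
    refine Beats.neg_notMem hf hab hd fun i => ?_
    rw [margin_swap hf honto hab]
    linarith [he i]
  obtain ⟨w, hw0, hwpos, hw⟩ := exists_weights_of_semigroup (NormBeats f a b)
    (fun d hd e he => Beats.mono hd fun i => by linarith [he i])
    (fun d hd => NormBeats.exists_sub hd)
    (fun d hd e he => NormBeats.add hf honto hca.symm hcb hab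
      (NormBeats.change hA hf honto hab hca.symm hd) (NormBeats.change hA hf honto hab hcb he))
    (fun ε hε => const_mem_normBeats honto hε)
    (fun h => hneg 0 h 0 (by simp) (NormBeats.change hA hf honto hab hab.symm h))
    (fun d hd ε hε => by
      refine NormBeats.change hA hf honto hab.symm hab ?_
      refine Beats.mono (Beats.neg_add_mem hf honto hab hd hε) fun i => ?_
      rw [margin_swap hf honto hab]
      linarith)
  refine ⟨w, fun a b => margin f a b * ∑ i, w i, hw0, hwpos, fun a b h => ?_, fun v e he => ?_⟩
  · simp only [margin_swap hf honto h, neg_mul]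
  · have h := hw (fun i => v i e - v i (f v) - margin f e (f v)) fun h => by
      refine Beats.ne hf he (v := v) ?_ rfl
      exact Beats.mono (NormBeats.change hA hf honto hab he h) fun i => by linarith
    rw [margin_swap hf honto he.symm] at h
    have h' : ∑ i, w i * (v i e - v i (f v) - -margin f (f v) e) =
        margin f (f v) e * ∑ i, w i - ∑ i, w i * (v i (f v) - v i e) := by
      rw [Finset.mul_sum, ← Finset.sum_sub_distrib]
      exact Finset.sum_congr rfl fun i _ => by ring
    linarith

/-- The linear type with values `v` and slope `α` or `β` at each alternative according to `s`. -/
def lin (α β : ℝ) (s : A → Bool) (v : A → ℝ) : Util A :=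
  fun a z => v a - (if s a then α else β) * z

/-- The profile of linear types with slope pattern `S` and values `v`. -/
def linProfile (α β : I → ℝ) (S : I → A → Bool) (v : I → A → ℝ) : I → Util A :=
  fun j => lin (α j) (β j) (S j) (v j)

/-- Agent `i` can obtain `a` at price `r` by some report, given the types of the others in `u`. -/
def Offered [DecidableEq I] (U : I → Set (Util A)) (x : (I → Util A) → A)
    (t : (I → Util A) → I → ℝ) (i : I) (u : I → Util A) (a : A) (r : ℝ) : Prop :=
  ∃ ui ∈ U i, x (Function.update u i ui) = a ∧ t (Function.update u i ui) i = r

section Mechanism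

variable [DecidableEq I] {U : I → Set (Util A)} {x : (I → Util A) → A}
  {t : (I → Util A) → I → ℝ} {i : I} {u : I → Util A} {a b : A} {p : A → ℝ} {α β : I → ℝ}

lemma update_mem (hu : ∀ j, u j ∈ U j) {ui : Util A} (hui : ui ∈ U i) :
    ∀ j, Function.update u i ui j ∈ U j := by
  intro j
  by_cases hj : j = i
  · subst hj
    simpa using hui
  · simpa [hj] using hu j

lemma update_linProfile (S : I → A → Bool) (v : I → A → ℝ) (s : A → Bool) (vi : A → ℝ) :
    Function.update (linProfile α β S v) i (lin (α i) (β i) s vi) =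
      linProfile α β (Function.update S i s) (Function.update v i vi) := by
  funext j
  by_cases hj : j = i
  · subst hj
    simp [linProfile]
  · simp [linProfile, hj]

lemma offered_self (hu : ∀ j, u j ∈ U j) : Offered U x t i u (x u) (t u i) :=
  ⟨u i, hu i, by simp, by simp⟩

lemma offered_update {ui : Util A} (hui : ui ∈ U i) :
    Offered U x t i u (x (Function.update u i ui)) (t (Function.update u i ui) i) :=
  ⟨ui, hui, rfl, rfl⟩

lemma Offered.congr {u' : I → Util A} {r : ℝ} (h : Offered U x t i u a r)
    (hu : ∀ j, j ≠ i → u j = u' j) : Offered U x t i u' a r := by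
  obtain ⟨ui, hui, h⟩ := h
  refine ⟨ui, hui, ?_⟩
  rwa [show Function.update u' i ui = Function.update u i ui from ?_]
  funext j
  by_cases hj : j = i
  · subst hj
    simp
  · simp [hj, hu j hj]

lemma Offered.le_update (hD : DSIC U x t) (hu : ∀ j, u j ∈ U j) {r : ℝ}
    (h : Offered U x t i u b r) {ui : Util A} (hui : ui ∈ U i) :
    ui b r ≤ ui (x (Function.update u i ui)) (t (Function.update u i ui) i) := by
  obtain ⟨ui', hui', rfl, rfl⟩ := h
  simpa using hD _ (update_mem hu hui') i ui hui

lemma Offered.unique (hS : ∀ i, ∀ u ∈ U i, S1 u) (hD : DSIC U x t) (hu : ∀ j, u j ∈ U j)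
    {r r' : ℝ} (h : Offered U x t i u a r) (h' : Offered U x t i u a r') : r = r' := by
  have key : ∀ r r' : ℝ, Offered U x t i u a r → Offered U x t i u a r' → r ≤ r' := by
    rintro r r' ⟨ui, hui, rfl, rfl⟩ h'
    exact (hS i ui hui _).2.le_iff_ge.1 (h'.le_update hD hu hui)
  exact le_antisymm (key _ _ h h') (key _ _ h' h)

lemma exists_prices (hS : ∀ i, ∀ u ∈ U i, S1 u) (hD : DSIC U x t) (hu : ∀ j, u j ∈ U j)
    (i : I) : ∃ p : A → ℝ, ∀ a r, Offered U x t i u a r → r = p a := by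
  classical
  refine ⟨fun a => if h : ∃ r, Offered U x t i u a r then h.choose else 0, fun a r h => ?_⟩
  have h' : ∃ r, Offered U x t i u a r := ⟨r, h⟩
  simp only [dif_pos h']
  exact h.unique hS hD hu h'.choose_spec

/-- At linear types, agent `i` obtains any offered alternative that is her strict optimum. -/
lemma x_update_lin_eq (hD : DSIC U x t)
    (hlin : ∀ i s v, lin (α i) (β i) s v ∈ U i) (hu : ∀ j, u j ∈ U j)
    (hp : ∀ a r, Offered U x t i u a r → r = p a) (ha : ∃ r, Offered U x t i u a r)
    {s : A → Bool} {v : A → ℝ}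
    (h : ∀ b, b ≠ a → lin (α i) (β i) s v b (p b) < lin (α i) (β i) s v a (p a)) :
    x (Function.update u i (lin (α i) (β i) s v)) = a := by
  by_contra hne
  obtain ⟨r, hr⟩ := ha
  have h₁ := hr.le_update hD hu (hlin i s v)
  rw [hp _ _ hr, hp _ _ (offered_update (hlin i s v))] at h₁
  exact (h _ hne).not_ge h₁

lemma exists_x_update_lin_eq (hS : ∀ i, ∀ u ∈ U i, S1 u) (hD : DSIC U x t)
    (hlin : ∀ i s v, lin (α i) (β i) s v ∈ U i) (hu : ∀ j, u j ∈ U j)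
    (ha : ∃ r, Offered U x t i u a r) (s : A → Bool) :
    ∃ v, x (Function.update u i (lin (α i) (β i) s v)) = a := by
  classical
  obtain ⟨p, hp⟩ := exists_prices hS hD hu i
  refine ⟨fun c => (if s c then α i else β i) * p c + if c = a then 1 else 0,
    x_update_lin_eq hD hlin hu hp ha fun b hb => ?_⟩
  simp [lin, hb]

lemma posAssoc_linProfile [Fintype I] (hD : DSIC U x t)
    (hlin : ∀ i s v, lin (α i) (β i) s v ∈ U i) (S : I → A → Bool) :
    PosAssoc fun v => x (linProfile α β S v) := by
  intro v v' h
  dsimp only at h ⊢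
  set a := x (linProfile α β S v)
  suffices H : ∀ T : Finset I, x (linProfile α β S (T.piecewise v' v)) = a by
    simpa using H Finset.univ
  intro T
  induction T using Finset.induction_on with
  | empty => simp [a]
  | insert i T hi ih =>
    have hmem : ∀ w j, linProfile α β S w j ∈ U j := fun w j => hlin j _ _
    set w := T.piecewise v' v
    have hwi : w i = v i := by simp [w, hi]
    have hup : linProfile α β S ((insert i T).piecewise v' v) =
        Function.update (linProfile α β S w) i (lin (α i) (β i) (S i) (v' i)) := by
      rw [update_linProfile, Function.update_eq_self, Finset.piecewise_insert]
    rw [hup]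
    by_contra hne
    have h₁ := (offered_self (x := x) (t := t) (i := i) (hmem w)).le_update hD (hmem w)
      (hlin i (S i) (v' i))
    have h₂ := (offered_update (x := x) (t := t) (u := linProfile α β S w)
      (hlin i (S i) (v' i))).le_update hD (hmem w) (hmem w i)
    rw [Function.update_eq_self] at h₂
    have h₃ := h i _ hne
    rw [ih] at h₁ h₂
    simp only [linProfile, lin, hwi] at h₁ h₂ h₃
    linarith

lemma surjective_linProfile [Fintype I] (hS : ∀ i, ∀ u ∈ U i, S1 u) (hD : DSIC U x t)
    (hlin : ∀ i s v, lin (α i) (β i) s v ∈ U i) (hO : OntoMech U x) (S : I → A → Bool) :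
    Function.Surjective fun v => x (linProfile α β S v) := by
  intro a
  have H : ∀ T : Finset I, ∃ u : I → Util A, (∀ j, u j ∈ U j) ∧ x u = a ∧
      ∀ j ∈ T, ∃ v, u j = lin (α j) (β j) (S j) v := by
    intro T
    induction T using Finset.induction_on with
    | empty =>
      obtain ⟨u, hu, hx⟩ := hO a
      exact ⟨u, hu, hx, by simp⟩
    | insert i T hi ih =>
      obtain ⟨u, hu, hx, hT⟩ := ih
      obtain ⟨v, hv⟩ := exists_x_update_lin_eq hS hD hlin hu (a := a)
        ⟨_, hx ▸ offered_self (x := x) (t := t) (i := i) hu⟩ (S i)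
      refine ⟨_, update_mem hu (hlin i (S i) v), hv, fun j hj => ?_⟩
      by_cases hji : j = i
      · subst hji
        exact ⟨v, by simp⟩
      · simpa [hji] using hT j (Finset.mem_of_mem_insert_of_ne hj hji)
  obtain ⟨u, -, hx, hlinear⟩ := H Finset.univ
  choose v hv using fun j => hlinear j (Finset.mem_univ j)
  refine ⟨v, ?_⟩
  dsimp only
  rw [show linProfile α β S v = u from (funext hv).symm, hx]

/-- With two slopes, the utility comparisons between `a` and `b` reveal the price of `a`. -/
lemma price_eq_of_thresholds {α β : ℝ} (hαβ : α ≠ β) (hab : a ≠ b) {p q : A → ℝ}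
    (h : ∀ s : A → Bool, (if s a then α else β) * p a - (if s b then α else β) * p b =
      (if s a then α else β) * q a - (if s b then α else β) * q b) : p a = q a := by
  classical
  have h₁ := h fun _ => true
  have h₂ := h fun c => decide (c ≠ a)
  simp only [if_true, ne_eq, not_true, decide_false, hab.symm, not_false_iff, decide_true,
    Bool.false_eq_true, if_false] at h₁ h₂
  have : (α - β) * (p a - q a) = 0 := by linarith
  exact sub_eq_zero.1 ((mul_eq_zero.1 this).resolve_left (sub_ne_zero.2 hαβ))

/-- Price vectors inducing the same choice at all types with a strict optimum are equal. -/
lemma prices_eq_of_choice [Nontrivial A] {α β : ℝ} (hαβ : α ≠ β)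
    {g : (A → Bool) → (A → ℝ) → A} {p q : A → ℝ}
    (hp : ∀ s v a, (∀ b, b ≠ a → lin α β s v b (p b) < lin α β s v a (p a)) → g s v = a)
    (hq : ∀ s v a, (∀ b, b ≠ a → lin α β s v b (q b) < lin α β s v a (q a)) → g s v = a) :
    p = q := by
  classical
  have key : ∀ p q : A → ℝ,
      (∀ s v a, (∀ b, b ≠ a → lin α β s v b (p b) < lin α β s v a (p a)) → g s v = a) →
      (∀ s v a, (∀ b, b ≠ a → lin α β s v b (q b) < lin α β s v a (q a)) → g s v = a) →
      ∀ (s : A → Bool) (a b : A), a ≠ b →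
      (if s a then α else β) * p a - (if s b then α else β) * p b ≤
      (if s a then α else β) * q a - (if s b then α else β) * q b := by
    intro p q hp hq s a b hab
    by_contra! hlt
    obtain ⟨y, hy₁, hy₂⟩ := exists_between hlt
    let v : A → ℝ := fun c => if c = a then y else if c = b then 0 else
      min ((if s c then α else β) * p c - (if s b then α else β) * p b)
        ((if s c then α else β) * q c + y - (if s a then α else β) * q a) - 1
    have hb : g s v = b := by
      refine hp s v b fun c hc => ?_
      by_cases hca : c = a
      · subst hca
        simp only [lin, v, if_true, if_neg hab.symm]
        linarith
      · have := min_le_left ((if s c then α else β) * p c - (if s b then α else β) * p b)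
          ((if s c then α else β) * q c + y - (if s a then α else β) * q a)
        simp only [lin, v, if_true, if_neg hab.symm, if_neg hca, if_neg hc]
        linarith
    have ha : g s v = a := by
      refine hq s v a fun c hc => ?_
      by_cases hcb : c = b
      · subst hcb
        simp only [lin, v, if_true, if_neg hc]
        linarith
      · have := min_le_right ((if s c then α else β) * p c - (if s b then α else β) * p b)
          ((if s c then α else β) * q c + y - (if s a then α else β) * q a)
        simp only [lin, v, if_true, if_neg hc, if_neg hcb]
        linarith
    exact hab (ha.symm.trans hb)
  funext a
  obtain ⟨b, hb⟩ := exists_ne a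
  exact price_eq_of_thresholds hαβ hb.symm fun s =>
    le_antisymm (key p q hp hq s a b hb.symm) (key q p hq hp s a b hb.symm)

/-- The utility threshold of agent `i` between two alternatives is an affine function of the
value differences of the other agents. -/
lemma exists_affine_threshold [Fintype A] [Fintype I] (hA : 3 ≤ Fintype.card A)
    (hS : ∀ i, ∀ u ∈ U i, S1 u) (hD : DSIC U x t)
    (hlin : ∀ i s v, lin (α i) (β i) s v ∈ U i) (hO : OntoMech U x) (S : I → A → Bool)
    {p : (I → A → ℝ) → A → ℝ}
    (hp : ∀ v a, Offered U x t i (linProfile α β S v) a (p v a)) (s : A → Bool) :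
    ∃ (w : I → ℝ) (γ : A → A → ℝ), 0 < w i ∧ ∀ a b, a ≠ b → ∀ v : I → A → ℝ,
      w i * ((if s a then α i else β i) * p v a - (if s b then α i else β i) * p v b) =
        γ a b - ∑ j ∈ Finset.univ.erase i, w j * (v j a - v j b) := by
  classical
  obtain ⟨w, γ, hw0, ⟨k, hk⟩, hγ, hw⟩ := (posAssoc_linProfile hD hlin
    (Function.update S i s)).exists_weights hA (surjective_linProfile hS hD hlin hO _)
  have hle : ∀ a b, a ≠ b → ∀ v : I → A → ℝ, γ a b ≤
      w i * ((if s a then α i else β i) * p v a - (if s b then α i else β i) * p v b) +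
        ∑ j ∈ Finset.univ.erase i, w j * (v j a - v j b) := by
    intro a b hab v
    refine le_of_forall_pos_le_add fun ε hε => ?_
    have hwi : 0 < w i + 1 := by linarith [hw0 i]
    have hδ : 0 < ε / (w i + 1) := div_pos hε hwi
    let vi : A → ℝ := fun c => (if s c then α i else β i) * p v c +
      if c = a then ε / (w i + 1) else 0
    have hu : ∀ j, linProfile α β S v j ∈ U j := fun j => hlin j _ _
    have hx := x_update_lin_eq (v := vi) (s := s) hD hlin hu
      (fun c r hr => hr.unique hS hD hu (hp v c)) ⟨_, hp v a⟩
      (fun c hc => by simpa [lin, vi, hc] using hδ)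
    rw [update_linProfile] at hx
    have h := hw (Function.update v i vi) b
    rw [hx, ← Finset.add_sum_erase _ _ (Finset.mem_univ i)] at h
    have hsum : ∑ j ∈ Finset.univ.erase i,
        w j * (Function.update v i vi j a - Function.update v i vi j b) =
        ∑ j ∈ Finset.univ.erase i, w j * (v j a - v j b) :=
      Finset.sum_congr rfl fun j hj => by simp [Finset.ne_of_mem_erase hj]
    rw [hsum] at h
    have hεw : w i * (ε / (w i + 1)) ≤ ε := by
      rw [mul_div_assoc', div_le_iff₀ hwi]
      nlinarith [hw0 i]
    have h' := h hab.symm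
    simp only [Function.update_self, vi, if_true, if_neg hab.symm] at h'
    linarith
  have heq : ∀ a b, a ≠ b → ∀ v : I → A → ℝ,
      w i * ((if s a then α i else β i) * p v a - (if s b then α i else β i) * p v b) =
        γ a b - ∑ j ∈ Finset.univ.erase i, w j * (v j a - v j b) := by
    intro a b hab v
    have h₁ := hle a b hab v
    have h₂ := hle b a hab.symm v
    have hsum : ∑ j ∈ Finset.univ.erase i, w j * (v j b - v j a) =
        -∑ j ∈ Finset.univ.erase i, w j * (v j a - v j b) := by
      rw [← Finset.sum_neg_distrib]
      exact Finset.sum_congr rfl fun j _ => by ring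
    rw [hγ a b hab, hsum] at h₂
    linarith
  refine ⟨w, γ, (hw0 i).lt_of_ne fun h0 => ?_, heq⟩
  have hki : k ≠ i := fun h => hk.ne' (h ▸ h0.symm)
  obtain ⟨a, b, hab⟩ : ∃ a b : A, a ≠ b :=
    Fintype.one_lt_card_iff.1 (show 1 < Fintype.card A by omega)
  have h₁ := heq a b hab 0
  have h₂ := heq a b hab (Pi.single k (Pi.single a 1))
  rw [← h0, zero_mul] at h₁ h₂
  rw [Finset.sum_eq_single_of_mem k (by simp [hki]) fun j _ hj => by simp [hj]] at h₂
  simp [hab.symm] at h₁ h₂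
  linarith

/-- On linear types, some agent faces constant finite prices for all alternatives. -/
lemma exists_const_prices [Fintype A] [Fintype I] (hA : 3 ≤ Fintype.card A)
    (hS : ∀ i, ∀ u ∈ U i, S1 u) (hD : DSIC U x t) (hαβ : ∀ i, α i ≠ β i)
    (hlin : ∀ i s v, lin (α i) (β i) s v ∈ U i) (hO : OntoMech U x) (S : I → A → Bool) :
    ∃ (i : I) (z : A → ℝ), ∀ v a, Offered U x t i (linProfile α β S v) a (z a) := by
  classical
  obtain ⟨w, γ, hw0, ⟨i, hi⟩, -, hw⟩ := (posAssoc_linProfile hD hlin S).exists_weights hA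
    (surjective_linProfile hS hD hlin hO S)
  have hfull : ∀ v a, ∃ r, Offered U x t i (linProfile α β S v) a r := by
    intro v a
    obtain ⟨M, hM⟩ := (Set.finite_range fun c =>
      (∑ j ∈ Finset.univ.erase i, w j * (v j c - v j a) - γ c a) / w i).bddAbove
    let vi : A → ℝ := fun c => if c = a then M + 1 else 0
    refine ⟨_, lin (α i) (β i) (S i) vi, hlin _ _ _, ?_, rfl⟩
    rw [update_linProfile, Function.update_eq_self]
    have h := hw (Function.update v i vi) a
    generalize x (linProfile α β S (Function.update v i vi)) = c at h ⊢
    by_contra hc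
    replace h := h (Ne.symm hc)
    have hsum : ∑ j ∈ Finset.univ.erase i,
        w j * (Function.update v i vi j c - Function.update v i vi j a) =
        ∑ j ∈ Finset.univ.erase i, w j * (v j c - v j a) :=
      Finset.sum_congr rfl fun j hj => by simp [Finset.ne_of_mem_erase hj]
    rw [← Finset.add_sum_erase _ _ (Finset.mem_univ i), hsum] at h
    have hMc := (div_le_iff₀ hi).1 (hM (Set.mem_range_self c))
    simp only [Function.update_self, vi, if_true, if_neg hc] at h
    nlinarith
  choose p hp using hfull
  have hpair : ∀ a b, a ≠ b → ∀ v v' : I → A → ℝ, (∀ j, v j a - v j b = v' j a - v' j b) →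
      p v a = p v' a := by
    intro a b hab v v' hvv
    refine price_eq_of_thresholds (hαβ i) hab fun s => ?_
    obtain ⟨w, γ, hwi, h⟩ := exists_affine_threshold hA hS hD hlin hO S hp s
    refine mul_left_cancel₀ hwi.ne' ?_
    rw [h a b hab v, h a b hab v']
    simp only [hvv]
  refine ⟨i, p 0, fun v a => ?_⟩
  obtain ⟨b, hb, -⟩ := exists_ne_ne hA a a
  obtain ⟨c, hca, hcb⟩ := exists_ne_ne hA a b
  have h₁ := hpair a b hb.symm v (fun j d => if d = c then v j a else v j d)
    (by simp [hca.symm, hcb.symm])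
  have h₂ := hpair a c hca.symm (fun j d => if d = c then v j a else v j d) 0
    (by simp [hca.symm])
  rw [← h₂, ← h₁]
  exact hp v a

/-- Prices that are constant on linear types of the others are constant on the whole domain. -/
lemma offered_of_linProfile [Fintype I] [Nontrivial A]
    (hS : ∀ i, ∀ u ∈ U i, S1 u) (hD : DSIC U x t) (hαβ : α i ≠ β i)
    (hlin : ∀ i s v, lin (α i) (β i) s v ∈ U i) (S : I → A → Bool) {z : A → ℝ}
    (hz : ∀ v a, Offered U x t i (linProfile α β S v) a (z a)) (hu : ∀ j, u j ∈ U j) (a : A) :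
    Offered U x t i u a (z a) := by
  classical
  suffices H : ∀ (T : Finset I) (u : I → Util A), (∀ j, u j ∈ U j) →
      (∀ j, j ∉ T → j ≠ i → ∃ v, u j = lin (α j) (β j) (S j) v) →
      ∀ a, Offered U x t i u a (z a) from
    H Finset.univ u hu (fun j hj => absurd (Finset.mem_univ j) hj) a
  intro T
  induction T using Finset.induction_on with
  | empty =>
    intro u _ hT a
    have hT' : ∀ j, ∃ v, j ≠ i → u j = lin (α j) (β j) (S j) v := by
      intro j
      by_cases hj : j = i
      · exact ⟨0, fun h => absurd hj h⟩
      · obtain ⟨v, hv⟩ := hT j (Finset.notMem_empty j) hj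
        exact ⟨v, fun _ => hv⟩
    choose v hv using hT'
    exact (hz v a).congr fun j hj => (hv j hj).symm
  | insert j T _ ih =>
    intro u hu hT
    by_cases hji : j = i
    · exact ih u hu fun k hk hki => hT k (by simp [hk, hji, hki]) hki
    have hchoice : ∀ s v a, (∀ b, b ≠ a →
        lin (α i) (β i) s v b (z b) < lin (α i) (β i) s v a (z a)) →
        x (Function.update u i (lin (α i) (β i) s v)) = a := by
      intro s v a hbest
      have hu' := update_mem hu (hlin i s v)
      obtain ⟨v', hv'⟩ := exists_x_update_lin_eq hS hD hlin hu'
        ⟨_, offered_self (x := x) (t := t) (i := j) hu'⟩ (S j)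
      rw [← hv', Function.update_comm (Ne.symm hji)]
      have hu'' := update_mem hu (hlin j (S j) v')
      have hoff := ih _ hu'' fun k hk hki => by
        by_cases hkj : k = j
        · subst hkj
          exact ⟨v', by simp⟩
        · simpa [hkj] using hT k (by simp [hk, hkj]) hki
      exact x_update_lin_eq hD hlin hu'' (fun c r hr => hr.unique hS hD hu'' (hoff c))
        ⟨_, hoff a⟩ hbest
    have hfull : ∀ a, ∃ r, Offered U x t i u a r := by
      intro a
      refine ⟨_, _, hlin i (S i) fun c => (if S i c then α i else β i) * z c +
        if c = a then 1 else 0, hchoice _ _ _ fun b hb => ?_, rfl⟩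
      simp [lin, hb]
    choose p hp using hfull
    have hpz : p = z := prices_eq_of_choice hαβ
      (g := fun s v => x (Function.update u i (lin (α i) (β i) s v)))
      (fun s v a h => x_update_lin_eq hD hlin hu
        (fun c r hr => hr.unique hS hD hu (hp c)) ⟨_, hp a⟩ h) hchoice
    exact hpz ▸ hp

end Mechanism

/-- Two-slopes dictatorship. With `|A| ≥ 3`, if each `U i` contains an
unrestricted linear domain with two slopes, then every DSIC, deterministic, onto
mechanism is a fixed price dictatorship. -/
theorem two_slopes_dictatorship
    [Fintype A] [Nonempty A] [Fintype I] [DecidableEq I]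
    (hA : 3 ≤ Fintype.card A)
    (U : I → Set (Util A))
    (hS : ∀ i, ∀ u ∈ U i, S1 u ∧ S2 u)
    -- each `U i` contains an unrestricted linear domain with two slopes
    (hTwo : ∀ i, ∃ α β : ℝ, 0 < α ∧ 0 < β ∧ α ≠ β ∧
      ∀ (v : A → ℝ) (s : A → Bool),
        (fun a z => v a - (if s a then α else β) * z) ∈ U i)
    (x : (I → Util A) → A) (t : (I → Util A) → I → ℝ)
    (hDSIC : DSIC U x t) (hOnto : OntoMech U x) :
    ∃ (istar : I) (z : A → ℝ), ∀ u : I → Util A, (∀ j, u j ∈ U j) →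
      (∀ a : A, u istar a (z a) ≤ u istar (x u) (z (x u))) ∧ t u istar = z (x u) := by
  choose α β _ _ hαβ hlin using hTwo
  replace hlin : ∀ i s v, lin (α i) (β i) s v ∈ U i := fun i s v => hlin i v s
  have hS1 : ∀ i, ∀ u ∈ U i, S1 u := fun i u hu => (hS i u hu).1
  have : Nontrivial A := Fintype.one_lt_card_iff_nontrivial.1 (by omega)
  obtain ⟨i, z, hz⟩ := exists_const_prices hA hS1 hDSIC hαβ hlin hOnto fun _ _ => true
  refine ⟨i, z, fun u hu => ?_⟩
  have hoff := offered_of_linProfile hS1 hDSIC (hαβ i) hlin _ hz hu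
  have ht : t u i = z (x u) := (offered_self hu).unique hS1 hDSIC hu (hoff (x u))
  refine ⟨fun a => ?_, ht⟩
  simpa [ht] using (hoff a).le_update hDSIC hu (hu i)
end NQLSC
end
end
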